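/- arXiv:2008.09278 — 3 statements merged into one kernel-verified Lean document; each statement's English description precedes it below -/
import Mathlib

section
/- Let K be a unital *-subalgebra of M_n(ℂ) with conditional expectation E, and f : (0,∞)→(0,∞) continuously differentiable with f convex. Then for every positive definite ρ, the Bregman relative entropy to K satisfies d^f(ρ‖E(ρ)) = inf over positive definite σ ∈ K of d^f(ρ‖σ). -/
open Matrix
open scoped ComplexOrder

/-- Bregman relative entropy `d^f(ρ‖σ) = tr(f(ρ) - f(σ) - (ρ - σ) f'(σ))`. -/
noncomputable def bregman {n : ℕ} (f f' : ℝ → ℝ) (ρ σ : Matrix (Fin n) (Fin n) ℂ) : ℂ :=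
  Matrix.trace (cfc f ρ - cfc f σ - (ρ - σ) * cfc f' σ)

/-!
Let `e i` be an orthonormal eigenbasis of `ρ` with eigenvalues `a i`. Since
`⟨e i, f(ρ) e i⟩ = f (a i)` and `⟨e i, ρ f'(σ) e i⟩ = a i * ⟨e i, f'(σ) e i⟩`, the Bregman relative
entropy `d^f(ρ‖σ)` is the sum over `i` of `⟨e i, φ(σ) e i⟩` with
`φ b = f (a i) - f b - (a i - b) * f' b`. This is nonnegative because the graph of a convex function
lies above its tangents. The projection `τ` of `ρ` onto `K` pairs with `K` as `ρ` does, and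
`f'(τ), f'(σ) ∈ K`, so `d^f(ρ‖σ) = d^f(ρ‖τ) + d^f(τ‖σ) ≥ d^f(ρ‖τ)` for `σ ∈ K`. Finally `τ` is an
admissible competitor: pairing with the spectral projection `P ∈ K` of an eigenvalue `l` of `τ`
gives `l = tr(ρ P) / tr P`, an average of eigenvalues of `ρ`.
-/

theorem tangent_le_of_convexOn {S : Set ℝ} {f : ℝ → ℝ} {c a b : ℝ} (hf : ConvexOn ℝ S f)
    (hc : HasDerivWithinAt f c S b) (ha : a ∈ S) (hb : b ∈ S) : f b + (a - b) * c ≤ f a := by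
  rcases lt_trichotomy a b with hab | rfl | hab
  · have hslope := hf.slope_le_of_hasDerivWithinAt ha hb hab hc
    rw [slope_def_field, div_le_iff₀ (sub_pos.2 hab)] at hslope
    linarith
  · simp
  · have hslope := hf.le_slope_of_hasDerivWithinAt hb ha hab hc
    rw [slope_def_field, le_div_iff₀ (sub_pos.2 hab)] at hslope
    linarith

section FunctionalCalculus

variable {m 𝕜 : Type*} [Fintype m] [DecidableEq m] [RCLike 𝕜] {A B P : Matrix m m 𝕜}

theorem continuousOn_real_spectrum (g : ℝ → ℝ) : ContinuousOn g (spectrum ℝ A) :=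
  finite_real_spectrum.continuousOn g

theorem posDef_iff_isHermitian_and_spectrum_subset :
    A.PosDef ↔ A.IsHermitian ∧ spectrum ℝ A ⊆ Set.Ioi 0 := by
  refine ⟨fun hA ↦ ⟨hA.isHermitian, ?_⟩, fun ⟨hA, hpos⟩ ↦ hA.posDef_iff_eigenvalues_pos.2
    fun i ↦ hpos (hA.eigenvalues_mem_spectrum_real i)⟩
  rw [hA.isHermitian.spectrum_real_eq_range_eigenvalues]
  exact Set.range_subset_iff.2 hA.eigenvalues_pos

open scoped MatrixOrder in
theorem posSemidef_cfc {g : ℝ → ℝ} (hg : ∀ x ∈ spectrum ℝ A, 0 ≤ g x) : (cfc g A).PosSemidef :=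
  nonneg_iff_posSemidef.1 (cfc_nonneg hg)

theorem cfc_mem_starSubalgebra {K : StarSubalgebra 𝕜 (Matrix m m 𝕜)} (hA : A ∈ K) (g : ℝ → ℝ) :
    cfc g A ∈ K :=
  have : IsClosed (K : Set (Matrix m m 𝕜)) :=
    K.toSubalgebra.toSubmodule.closed_of_finiteDimensional
  cfc_mem (𝕜' := 𝕜) g hA

/-- The vector state `P ↦ ⟨e i, P e i⟩` of the `i`-th vector of an orthonormal eigenbasis `e` of a
Hermitian matrix, written as a diagonal entry of `P` in that basis. -/
noncomputable def eigenvectorState (hA : A.IsHermitian) (i : m) : Matrix m m 𝕜 →ₗ[𝕜] 𝕜 :=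
  entryLinearMap 𝕜 𝕜 i i ∘ₗ LinearMap.mulLeftRight 𝕜
    ((hA.eigenvectorUnitary : Matrix m m 𝕜)ᴴ, (hA.eigenvectorUnitary : Matrix m m 𝕜))

theorem eigenvectorState_apply (hA : A.IsHermitian) (i : m) (P : Matrix m m 𝕜) :
    eigenvectorState hA i P =
      ((hA.eigenvectorUnitary : Matrix m m 𝕜)ᴴ * P * hA.eigenvectorUnitary) i i := by
  simp [eigenvectorState]

theorem eigenvectorState_one (hA : A.IsHermitian) (i : m) : eigenvectorState hA i 1 = 1 := by
  rw [eigenvectorState_apply, mul_one, ← star_eq_conjTranspose, Unitary.coe_star_mul_self,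
    one_apply_eq]

theorem eigenvectorState_nonneg (hA : A.IsHermitian) (hP : P.PosSemidef) (i : m) :
    0 ≤ eigenvectorState hA i P := by
  rw [eigenvectorState_apply]
  exact (hP.conjTranspose_mul_mul_same _).diag_nonneg

theorem sum_eigenvectorState (hA : A.IsHermitian) (P : Matrix m m 𝕜) :
    ∑ i, eigenvectorState hA i P = P.trace := by
  set U := (hA.eigenvectorUnitary : Matrix m m 𝕜)
  calc ∑ i, eigenvectorState hA i P = (Uᴴ * P * U).trace :=
        Finset.sum_congr rfl fun i _ ↦ eigenvectorState_apply hA i P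
    _ = (U * star U * P).trace := trace_mul_cycle _ _ _
    _ = P.trace := by rw [Unitary.mul_star_self_of_mem hA.eigenvectorUnitary.2, one_mul]

theorem eigenvectorState_cfc_mul (hA : A.IsHermitian) (g : ℝ → ℝ) (P : Matrix m m 𝕜) (i : m) :
    eigenvectorState hA i (cfc g A * P) = g (hA.eigenvalues i) * eigenvectorState hA i P := by
  rw [hA.cfc_eq, IsHermitian.cfc, Unitary.conjStarAlgAut_apply, eigenvectorState_apply,
    eigenvectorState_apply, ← star_eq_conjTranspose]
  simp only [← mul_assoc, Unitary.coe_star_mul_self, one_mul]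
  rw [mul_assoc, mul_assoc, ← mul_assoc (star _), diagonal_mul]
  rfl

theorem eigenvectorState_mul (hA : A.IsHermitian) (P : Matrix m m 𝕜) (i : m) :
    eigenvectorState hA i (A * P) = hA.eigenvalues i * eigenvectorState hA i P := by
  have hid : cfc (id : ℝ → ℝ) A = A := cfc_id ℝ A hA
  simpa only [hid, id] using eigenvectorState_cfc_mul hA id P i

theorem mem_of_trace_mul_eq {S : Set ℝ} (hS : Convex ℝ S) (hA : A.IsHermitian)
    (hAS : spectrum ℝ A ⊆ S) (hP : P.PosSemidef) (hP0 : P ≠ 0) {l : ℝ}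
    (hl : (A * P).trace = l * P.trace) : l ∈ S := by
  choose w hw hwP using fun i ↦
    RCLike.nonneg_iff_exists_ofReal.1 (eigenvectorState_nonneg hA hP i)
  have htrace : P.trace = (∑ i, w i : ℝ) := by
    simp only [← sum_eigenvectorState hA, ← hwP, RCLike.ofReal_sum]
  have hpos : 0 < ∑ i, w i := by
    refine (Finset.sum_nonneg fun i _ ↦ hw i).lt_of_ne' fun h0 ↦ hP0 ?_
    rwa [← hP.trace_eq_zero_iff, htrace, RCLike.ofReal_eq_zero]
  have hmean : ∑ i, w i * hA.eigenvalues i = l * ∑ i, w i := by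
    rw [htrace, ← sum_eigenvectorState hA] at hl
    simp only [eigenvectorState_mul, ← hwP] at hl
    simp_rw [mul_comm (w _)]
    exact_mod_cast hl
  have hcenter : Finset.univ.centerMass w hA.eigenvalues = l := by
    rw [Finset.centerMass, smul_eq_mul, inv_mul_eq_iff_eq_mul₀ hpos.ne', mul_comm]
    exact hmean
  exact hcenter ▸ hS.centerMass_mem (fun i _ ↦ hw i) hpos
    fun i _ ↦ hAS (hA.eigenvalues_mem_spectrum_real i)

theorem exists_posSemidef_mem_mul_eq_smul {K : StarSubalgebra 𝕜 (Matrix m m 𝕜)} (hA : A.IsHermitian)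
    (hAK : A ∈ K) {l : ℝ} (hl : l ∈ spectrum ℝ A) :
    ∃ P ∈ K, P.PosSemidef ∧ P ≠ 0 ∧ A * P = (l : 𝕜) • P := by
  have hsa : IsSelfAdjoint A := hA
  set g : ℝ → ℝ := Pi.single l 1
  have hg : 0 ≤ g := Pi.single_nonneg.2 zero_le_one
  refine ⟨cfc g A, cfc_mem_starSubalgebra hAK g, posSemidef_cfc fun x _ ↦ hg x, fun h0 ↦ ?_, ?_⟩
  · rw [← cfc_const_zero ℝ A, cfc_eq_cfc_iff_eqOn (hf := continuousOn_real_spectrum _)] at h0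
    simpa [g] using h0 hl
  · have hmul : (fun x ↦ id x * g x) = fun x ↦ l * g x := by
      ext x
      rcases eq_or_ne x l with rfl | hx <;> simp [g, *]
    nth_rw 1 [← cfc_id ℝ A]
    rw [← cfc_mul id g A (continuousOn_real_spectrum _) (continuousOn_real_spectrum _), hmul,
      cfc_const_mul l g A (continuousOn_real_spectrum _),
      RCLike.real_smul_eq_coe_smul (K := 𝕜)]

/-- `τ` is the projection of `ρ` onto `K` that is orthogonal for the trace form, i.e. the value at
`ρ` of the trace-preserving conditional expectation onto `K`. -/
structure IsTraceProjection (K : StarSubalgebra 𝕜 (Matrix m m 𝕜)) (ρ τ : Matrix m m 𝕜) : Prop where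
  mem : τ ∈ K
  trace_mul : ∀ k ∈ K, (ρ * k).trace = (τ * k).trace

namespace IsTraceProjection

variable {K : StarSubalgebra 𝕜 (Matrix m m 𝕜)} {ρ τ τ' : Matrix m m 𝕜}

theorem of_trace_mul_comm {E : Matrix m m 𝕜 → Matrix m m 𝕜} (hEmem : ∀ x, E x ∈ K)
    (hEfix : ∀ x ∈ K, E x = x) (hEadj : ∀ x y, (x * E y).trace = (E x * y).trace)
    (ρ : Matrix m m 𝕜) : IsTraceProjection K ρ (E ρ) where
  mem := hEmem ρ
  trace_mul k hk := by rw [← hEadj, hEfix k hk]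

theorem conjTranspose (h : IsTraceProjection K ρ τ) : IsTraceProjection K ρᴴ τᴴ where
  mem := star_mem h.mem
  trace_mul k hk := by
    have hstar (M : Matrix m m 𝕜) : (Mᴴ * k).trace = star (M * kᴴ).trace := by
      rw [← trace_conjTranspose, conjTranspose_mul, conjTranspose_conjTranspose, trace_mul_comm]
    rw [hstar, hstar, h.trace_mul kᴴ (star_mem hk)]

theorem unique (h : IsTraceProjection K ρ τ) (h' : IsTraceProjection K ρ τ') : τ = τ' := by
  rw [← sub_eq_zero, ← trace_mul_conjTranspose_self_eq_zero_iff, sub_mul, trace_sub, sub_eq_zero]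
  have hk : (τ - τ')ᴴ ∈ K := star_mem (sub_mem h.mem h'.mem)
  rw [← h.trace_mul _ hk, h'.trace_mul _ hk]

theorem isHermitian (h : IsTraceProjection K ρ τ) (hρ : ρ.IsHermitian) : τ.IsHermitian :=
  (hρ.eq ▸ h.conjTranspose).unique h

theorem spectrum_subset (h : IsTraceProjection K ρ τ) (hρ : ρ.IsHermitian) {S : Set ℝ}
    (hS : Convex ℝ S) (hρS : spectrum ℝ ρ ⊆ S) : spectrum ℝ τ ⊆ S := by
  intro l hl
  obtain ⟨P, hPK, hP, hP0, hτP⟩ := exists_posSemidef_mem_mul_eq_smul (h.isHermitian hρ) h.mem hl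
  refine mem_of_trace_mul_eq hS hρ hρS hP hP0 ?_
  rw [h.trace_mul P hPK, hτP, trace_smul, smul_eq_mul]

end IsTraceProjection

theorem cfc_tangent_remainder (hB : B.IsHermitian) (f f' : ℝ → ℝ) (a : ℝ) :
    cfc (fun b ↦ f a - f b - (a - b) * f' b) B =
      (f a : 𝕜) • 1 - cfc f B - ((a : 𝕜) • 1 - B) * cfc f' B := by
  have hsa : IsSelfAdjoint B := hB
  have hcont (g : ℝ → ℝ) : ContinuousOn g (spectrum ℝ B) := continuousOn_real_spectrum g
  have hconst (c : ℝ) : cfc (fun _ ↦ c) B = (c : 𝕜) • 1 := by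
    rw [cfc_const c B, Algebra.algebraMap_eq_smul_one, RCLike.real_smul_eq_coe_smul (K := 𝕜)]
  rw [cfc_sub _ _ B (hcont _) (hcont _), cfc_sub _ _ B (hcont _) (hcont _),
    cfc_mul _ _ B (hcont _) (hcont _), cfc_sub _ _ B (hcont _) (hcont _), hconst, hconst,
    cfc_id' ℝ B]

end FunctionalCalculus

section Bregman

variable {n : ℕ} {f f' : ℝ → ℝ} {S : Set ℝ} {ρ σ τ : Matrix (Fin n) (Fin n) ℂ}

theorem bregman_eq_sum_eigenvectorState (hρ : ρ.IsHermitian) (hσ : σ.IsHermitian) :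
    bregman f f' ρ σ = ∑ i, eigenvectorState hρ i
      (cfc (fun b ↦ f (hρ.eigenvalues i) - f b - (hρ.eigenvalues i - b) * f' b) σ) := by
  rw [bregman, ← sum_eigenvectorState hρ]
  refine Finset.sum_congr rfl fun i _ ↦ ?_
  have hf : eigenvectorState hρ i (cfc f ρ) = f (hρ.eigenvalues i) := by
    simpa [eigenvectorState_one] using eigenvectorState_cfc_mul hρ f 1 i
  rw [cfc_tangent_remainder hσ]
  simp [sub_mul, eigenvectorState_mul, eigenvectorState_one, hf]

theorem bregman_nonneg (hf : ConvexOn ℝ S f) (hf' : ∀ x ∈ S, HasDerivWithinAt f (f' x) S x)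
    (hρ : ρ.IsHermitian) (hρS : spectrum ℝ ρ ⊆ S) (hσ : σ.IsHermitian) (hσS : spectrum ℝ σ ⊆ S) :
    0 ≤ bregman f f' ρ σ := by
  rw [bregman_eq_sum_eigenvectorState hρ hσ]
  refine Finset.sum_nonneg fun i _ ↦ eigenvectorState_nonneg hρ (posSemidef_cfc fun b hb ↦ ?_) i
  have htangent := tangent_le_of_convexOn hf (hf' b (hσS hb))
    (hρS (hρ.eigenvalues_mem_spectrum_real i)) (hσS hb)
  linarith

theorem IsTraceProjection.bregman_add {K : StarSubalgebra ℂ (Matrix (Fin n) (Fin n) ℂ)}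
    (h : IsTraceProjection K ρ τ) (hσ : σ ∈ K) :
    bregman f f' ρ τ + bregman f f' τ σ = bregman f f' ρ σ := by
  simp only [bregman, sub_mul, trace_sub, h.trace_mul _ (cfc_mem_starSubalgebra h.mem f'),
    h.trace_mul _ (cfc_mem_starSubalgebra hσ f')]
  ring

theorem bregman_inf_over_subalgebra_general {K : StarSubalgebra ℂ (Matrix (Fin n) (Fin n) ℂ)}
    (hf : ConvexOn ℝ S f) (hf' : ∀ x ∈ S, HasDerivWithinAt f (f' x) S x)
    (hρ : ρ.IsHermitian) (hρS : spectrum ℝ ρ ⊆ S) (hτ : IsTraceProjection K ρ τ) :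
    IsLeast {x : ℝ | ∃ σ : Matrix (Fin n) (Fin n) ℂ,
      (σ.IsHermitian ∧ spectrum ℝ σ ⊆ S) ∧ σ ∈ K ∧ x = (bregman f f' ρ σ).re}
      (bregman f f' ρ τ).re := by
  have hτH : τ.IsHermitian := hτ.isHermitian hρ
  have hτS : spectrum ℝ τ ⊆ S := hτ.spectrum_subset hρ hf.1 hρS
  refine ⟨⟨τ, ⟨hτH, hτS⟩, hτ.mem, rfl⟩, ?_⟩
  rintro _ ⟨σ, ⟨hσ, hσS⟩, hσK, rfl⟩
  rw [← hτ.bregman_add hσK]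
  exact Complex.re_le_re (le_add_of_nonneg_right (bregman_nonneg hf hf' hτH hτS hσ hσS))

end Bregman

/-- for the conditional expectation `E` onto a unital *-subalgebra `K` and a convex
C¹ function `f : (0,∞) → (0,∞)`, the Bregman relative entropy to `K` satisfies
`d^f(ρ‖E(ρ)) = inf { d^f(ρ‖σ) | σ ∈ K positive definite }`. -/
theorem bregman_inf_over_subalgebra {n : ℕ}
    (K : StarSubalgebra ℂ (Matrix (Fin n) (Fin n) ℂ))
    (E : Matrix (Fin n) (Fin n) ℂ →ₗ[ℂ] Matrix (Fin n) (Fin n) ℂ)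
    (hEmem : ∀ x, E x ∈ K)
    (hEfix : ∀ x ∈ K, E x = x)
    (hEtr : ∀ x, (E x).trace = x.trace)
    (hEadj : ∀ x y, (x * E y).trace = (E x * y).trace)
    (hEmod : ∀ a ∈ K, ∀ b ∈ K, ∀ x, E (a * x * b) = a * E x * b)
    (f f' : ℝ → ℝ)
    (hf_pos : ∀ x ∈ Set.Ioi (0 : ℝ), 0 < f x)
    (hf_conv : ConvexOn ℝ (Set.Ioi 0) f)
    (hf_deriv : ∀ x ∈ Set.Ioi (0 : ℝ), HasDerivAt f (f' x) x)
    (hf'_cont : ContinuousOn f' (Set.Ioi 0))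
    (ρ : Matrix (Fin n) (Fin n) ℂ) (hρ : ρ.PosDef) :
    (bregman f f' ρ (E ρ)).re =
      sInf {x : ℝ | ∃ σ : Matrix (Fin n) (Fin n) ℂ,
        σ.PosDef ∧ σ ∈ K ∧ x = (bregman f f' ρ σ).re} := by
  obtain ⟨hρH, hρS⟩ := posDef_iff_isHermitian_and_spectrum_subset.1 hρ
  simpa only [posDef_iff_isHermitian_and_spectrum_subset] using
    (bregman_inf_over_subalgebra_general hf_conv (fun x hx ↦ (hf_deriv x hx).hasDerivWithinAt)
      hρH hρS (.of_trace_mul_comm hEmem hEfix hEadj ρ)).csInf_eq.symm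
end

section
/- Let p ∈ (1,2). The function F(ρ,σ) = tr[(ρ − σ)(ρ^{p−1} − σ^{p−1})] is jointly convex on pairs of positive definite n×n matrices: for ρ₁,ρ₂,σ₁,σ₂ positive definite and λ ∈ [0,1], F(λρ₁+(1−λ)ρ₂, λσ₁+(1−λ)σ₂) ≤ λF(ρ₁,σ₁) + (1−λ)F(ρ₂,σ₂). -/
open Matrix
open scoped ComplexOrder

/-- Matrix power `A^q` (real exponent) via the continuous functional calculus. -/
noncomputable def mpow {n : ℕ} (A : Matrix (Fin n) (Fin n) ℂ) (q : ℝ) :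
    Matrix (Fin n) (Fin n) ℂ :=
  cfc (fun x : ℝ => x ^ q) A

/-- `F(ρ,σ) = tr[(ρ − σ)(ρ^{p−1} − σ^{p−1})]` (real part of the trace). -/
noncomputable def Fp {n : ℕ} (p : ℝ) (ρ σ : Matrix (Fin n) (Fin n) ℂ) : ℝ :=
  (Matrix.trace ((ρ - σ) * (mpow ρ (p - 1) - mpow σ (p - 1)))).re

/-!
Let `L_A` and `R_B` be the commuting operators of left multiplication by `A` and right
multiplication by `B`. For `s = p - 1`,
`tr[(A - B)(A ^ s - B ^ s)] = ⟨A - B, k(L_A, R_B) (A - B)⟩` with the divided difference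
`k(a, b) = (a ^ s - b ^ s) / (a - b)`. This kernel equals
`s ∫₀¹ (u a + (1 - u) b) ^ (s - 1) du`, and `x ^ (s - 1)` is a positive multiple of
`∫₀^∞ t ^ (s - 1) / (x + t) dt`. So it is enough to treat the kernels `1 / (u a + v b + t)`.
Their operator `T = u L_A + v R_B + t` is affine in `(A, B)`, and
`⟨X, T⁻¹ X⟩ = max_Y (2 Re ⟨Y, X⟩ - ⟨Y, T Y⟩)` is a maximum of affine functions of `(A, B, X)`.
-/

open MeasureTheory
open Set (Icc Ioo Ioi)

section Convexity

variable {R E β : Type*} [Semiring R] [PartialOrder R] [AddCommMonoid E] [SMul R E]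
  [AddCommMonoid β] [PartialOrder β] [IsOrderedAddMonoid β] [SMulZeroClass R β] [PosSMulMono R β]

theorem convexOn_of_exists_convexOn_minorant {S : Set E} {f : E → β} (hS : Convex R S)
    (h : ∀ x ∈ S, ∃ g : E → β, ConvexOn R S g ∧ g x = f x ∧ ∀ y ∈ S, g y ≤ f y) :
    ConvexOn R S f := by
  refine ⟨hS, fun x hx y hy a b ha hb hab => ?_⟩
  obtain ⟨g, hg, hgf, hle⟩ := h _ (hS hx hy ha hb hab)
  calc f (a • x + b • y) = g (a • x + b • y) := hgf.symm
    _ ≤ a • g x + b • g y := hg.2 hx hy ha hb hab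
    _ ≤ a • f x + b • f y := by gcongr <;> exact hle _ ‹_›

end Convexity

section Scalar

variable {s x : ℝ}

theorem rpowIntegrand₀₁_eq_mul_rpow_mul_inv {t : ℝ} (hs : s ∈ Ioo (0 : ℝ) 1) (ht : 0 < t)
    (hx : 0 ≤ x) : Real.rpowIntegrand₀₁ s t x = x * (t ^ (s - 1) * (x + t)⁻¹) := by
  rw [Real.rpowIntegrand₀₁_eq_pow_div hs ht.le hx, add_comm x]
  ring

theorem integrableOn_rpow_mul_inv_add (hs : s ∈ Ioo (0 : ℝ) 1) (hx : 0 < x) :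
    IntegrableOn (fun t => t ^ (s - 1) * (x + t)⁻¹) (Ioi 0) := by
  refine IntegrableOn.congr_fun ((Real.integrableOn_rpowIntegrand₀₁_Ioi hs hx.le).const_mul x⁻¹)
    (fun t ht => ?_) measurableSet_Ioi
  simp only [rpowIntegrand₀₁_eq_mul_rpow_mul_inv hs ht hx.le, inv_mul_cancel_left₀ hx.ne']

theorem integral_rpow_mul_inv_add (hs : s ∈ Ioo (0 : ℝ) 1) (hx : 0 < x) :
    ∫ t in Ioi 0, t ^ (s - 1) * (x + t)⁻¹ =
      x ^ (s - 1) * ∫ t in Ioi 0, Real.rpowIntegrand₀₁ s t 1 := by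
  have h : x * ∫ t in Ioi 0, t ^ (s - 1) * (x + t)⁻¹ =
      x ^ s * ∫ t in Ioi 0, Real.rpowIntegrand₀₁ s t 1 := by
    rw [← Real.integral_rpowIntegrand₀₁_eq_rpow_mul_const hs hx.le, ← integral_const_mul]
    exact setIntegral_congr_fun measurableSet_Ioi fun t ht =>
      (rpowIntegrand₀₁_eq_mul_rpow_mul_inv hs ht hx.le).symm
  rw [Real.rpow_sub_one hx.ne', div_mul_eq_mul_div, ← h, mul_div_cancel_left₀ _ hx.ne']

theorem intervalIntegrable_segment_rpow {r a b : ℝ} (hr : -1 < r) (hab : a ≠ b) :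
    IntervalIntegrable (fun u : ℝ => (u * a + (1 - u) * b) ^ r) volume 0 1 := by
  have h := ((intervalIntegral.intervalIntegrable_rpow' (a := b) (b := a) hr).comp_add_right
    b).comp_mul_left (c := a - b)
  simp only [sub_self, zero_div, div_self (sub_ne_zero.2 hab)] at h
  exact h.congr fun u _ => by ring_nf

theorem rpow_sub_rpow_div_sub_eq_integral {a b : ℝ} (hs : 0 < s) (hab : a ≠ b) :
    (a ^ s - b ^ s) / (a - b) = s * ∫ u in (0 : ℝ)..1, (u * a + (1 - u) * b) ^ (s - 1) := by
  have h : (a - b) * ∫ u in (0 : ℝ)..1, (u * a + (1 - u) * b) ^ (s - 1) = (a ^ s - b ^ s) / s := by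
    calc _ = (a - b) * ∫ u in (0 : ℝ)..1, ((a - b) * u + b) ^ (s - 1) := by ring_nf
      _ = ∫ x in b..a, x ^ (s - 1) := by
        rw [intervalIntegral.mul_integral_comp_mul_add (f := fun x => x ^ (s - 1))]
        simp
      _ = _ := by rw [integral_rpow (Or.inl (by linarith)), sub_add_cancel]
  rw [div_eq_iff (sub_ne_zero.2 hab), mul_assoc, mul_comm _ (a - b), h, mul_div_cancel₀ _ hs.ne']

end Scalar

variable {𝕜 n : Type*} [RCLike 𝕜]

variable (𝕜 n) in
/-- The pairs of positive semidefinite matrices, the domain of joint convexity. -/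
def posSemidefPairs : Set (Matrix n n 𝕜 × Matrix n n 𝕜) :=
  {A | A.PosSemidef} ×ˢ {B | B.PosSemidef}

theorem convex_posSemidefPairs : Convex ℝ (posSemidefPairs 𝕜 n) :=
  fun _ hP _ hQ _ _ ha hb _ =>
    ⟨(hP.1.smul ha).add (hQ.1.smul hb), (hP.2.smul ha).add (hQ.2.smul hb)⟩

section ResolventMinorant

variable [Fintype n]

/-- `2 Re ⟨Y, X⟩ - ⟨Y, (u L_A + v R_B + t) Y⟩`, whose maximum over `Y` is
`⟨X, (u L_A + v R_B + t)⁻¹ X⟩`. -/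
noncomputable def resolventMinorant (u v t : ℝ) (Y A B X : Matrix n n 𝕜) : ℝ :=
  2 * RCLike.re (trace (X * Yᴴ)) -
    (u * RCLike.re (trace (A * Y * Yᴴ)) + v * RCLike.re (trace (Y * B * Yᴴ)) +
      t * RCLike.re (trace (Y * Yᴴ)))

theorem convexOn_resolventMinorant (u v t : ℝ) (Y : Matrix n n 𝕜)
    {S : Set ((Matrix n n 𝕜 × Matrix n n 𝕜) × Matrix n n 𝕜)} (hS : Convex ℝ S) :
    ConvexOn ℝ S fun P => resolventMinorant u v t Y P.1.1 P.1.2 P.2 := by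
  refine ⟨hS, fun P _ Q _ a b _ _ hab => le_of_eq ?_⟩
  obtain rfl := eq_sub_of_add_eq' hab
  simp only [resolventMinorant, Prod.fst_add, Prod.snd_add, Prod.smul_fst, Prod.smul_snd, add_mul,
    mul_add, smul_mul_assoc, mul_smul_comm, trace_add, trace_smul, map_add, RCLike.smul_re,
    smul_eq_mul]
  ring

end ResolventMinorant

variable [Fintype n] [DecidableEq n] {A B : Matrix n n 𝕜}

section EigenCoords

/-- The matrix of `X` in an orthonormal eigenbasis of `B` (source) and one of `A` (target). It
diagonalizes left multiplication by `A` and right multiplication by `B` simultaneously. -/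
noncomputable def eigenCoords (hA : A.IsHermitian) (hB : B.IsHermitian) (X : Matrix n n 𝕜) :
    Matrix n n 𝕜 :=
  star (hA.eigenvectorUnitary : Matrix n n 𝕜) * X * hB.eigenvectorUnitary

variable (hA : A.IsHermitian) (hB : B.IsHermitian)

theorem eigenCoords_surjective : Function.Surjective (eigenCoords hA hB) := by
  refine fun Z => ⟨hA.eigenvectorUnitary * Z * star (hB.eigenvectorUnitary : Matrix n n 𝕜), ?_⟩
  simp only [eigenCoords, mul_assoc, Unitary.coe_star_mul_self, mul_one]
  rw [← mul_assoc, Unitary.coe_star_mul_self, one_mul]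

theorem trace_mul_conjTranspose_eq_sum_eigenCoords (X Y : Matrix n n 𝕜) :
    trace (X * Yᴴ) = ∑ i, ∑ j, eigenCoords hA hB X i j * star (eigenCoords hA hB Y i j) := by
  have h : eigenCoords hA hB X * (eigenCoords hA hB Y)ᴴ =
      star (hA.eigenvectorUnitary : Matrix n n 𝕜) * (X * Yᴴ) * hA.eigenvectorUnitary := by
    simp only [eigenCoords, ← star_eq_conjTranspose, star_mul, star_star, mul_assoc]
    rw [← mul_assoc (hB.eigenvectorUnitary : Matrix n n 𝕜), Unitary.mul_star_self_of_mem
      hB.eigenvectorUnitary.2, one_mul]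
  calc trace (X * Yᴴ) = trace (eigenCoords hA hB X * (eigenCoords hA hB Y)ᴴ) := by
        rw [h, trace_mul_cycle, Unitary.mul_star_self_of_mem hA.eigenvectorUnitary.2, one_mul]
    _ = _ := by simp only [trace, diag_apply, mul_apply, conjTranspose_apply]

theorem eigenCoords_cfc_mul (f : ℝ → ℝ) (X : Matrix n n 𝕜) (i j : n) :
    eigenCoords hA hB (cfc f A * X) i j = f (hA.eigenvalues i) * eigenCoords hA hB X i j := by
  have h : eigenCoords hA hB (cfc f A * X) =
      diagonal (RCLike.ofReal ∘ f ∘ hA.eigenvalues) * eigenCoords hA hB X := by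
    rw [hA.cfc_eq, IsHermitian.cfc, Unitary.conjStarAlgAut_apply]
    simp only [eigenCoords, ← mul_assoc, Unitary.coe_star_mul_self, one_mul]
  rw [h, diagonal_mul, Function.comp_apply, Function.comp_apply]

theorem eigenCoords_mul_cfc (f : ℝ → ℝ) (X : Matrix n n 𝕜) (i j : n) :
    eigenCoords hA hB (X * cfc f B) i j = f (hB.eigenvalues j) * eigenCoords hA hB X i j := by
  have h : eigenCoords hA hB (X * cfc f B) =
      eigenCoords hA hB X * diagonal (RCLike.ofReal ∘ f ∘ hB.eigenvalues) := by
    rw [hB.cfc_eq, IsHermitian.cfc, Unitary.conjStarAlgAut_apply]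
    simp only [eigenCoords, mul_assoc, Unitary.coe_star_mul_self, mul_one]
  rw [h, mul_diagonal, Function.comp_apply, Function.comp_apply, mul_comm]

theorem eigenCoords_mul_left (X : Matrix n n 𝕜) (i j : n) :
    eigenCoords hA hB (A * X) i j = hA.eigenvalues i * eigenCoords hA hB X i j := by
  simpa only [cfc_id' ℝ A hA.isSelfAdjoint] using eigenCoords_cfc_mul hA hB (fun x => x) X i j

theorem eigenCoords_mul_right (X : Matrix n n 𝕜) (i j : n) :
    eigenCoords hA hB (X * B) i j = hB.eigenvalues j * eigenCoords hA hB X i j := by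
  simpa only [cfc_id' ℝ B hB.isSelfAdjoint] using eigenCoords_mul_cfc hA hB (fun x => x) X i j

theorem eigenCoords_cfc_sub_cfc (f : ℝ → ℝ) (i j : n) :
    eigenCoords hA hB (cfc f A - cfc f B) i j =
      (f (hA.eigenvalues i) - f (hB.eigenvalues j) : ℝ) * eigenCoords hA hB 1 i j := by
  have hl := eigenCoords_cfc_mul hA hB f 1 i j
  have hr := eigenCoords_mul_cfc hA hB f 1 i j
  rw [mul_one] at hl
  rw [one_mul] at hr
  have hsub : eigenCoords hA hB (cfc f A - cfc f B) =
      eigenCoords hA hB (cfc f A) - eigenCoords hA hB (cfc f B) := by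
    simp only [eigenCoords, mul_sub, sub_mul]
  rw [hsub, Matrix.sub_apply, hl, hr, RCLike.ofReal_sub, sub_mul]

theorem eigenCoords_sub (i j : n) :
    eigenCoords hA hB (A - B) i j =
      (hA.eigenvalues i - hB.eigenvalues j : ℝ) * eigenCoords hA hB 1 i j := by
  simpa only [cfc_id' ℝ A hA.isSelfAdjoint, cfc_id' ℝ B hB.isSelfAdjoint] using
    eigenCoords_cfc_sub_cfc hA hB (fun x => x) i j

end EigenCoords

section LeftRightForm

open Classical in
/-- The quadratic form `⟨X, k(L_A, R_B) X⟩` of the Hilbert-Schmidt inner product, where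
`k(L_A, R_B)` is the joint functional calculus of left multiplication by `A` and right
multiplication by `B`. It is set to `0` unless `A` and `B` are both Hermitian. -/
noncomputable def leftRightForm (k : ℝ → ℝ → ℝ) (A B X : Matrix n n 𝕜) : ℝ :=
  if h : A.IsHermitian ∧ B.IsHermitian then
    ∑ i, ∑ j, ‖eigenCoords h.1 h.2 X i j‖ ^ 2 * k (h.1.eigenvalues i) (h.2.eigenvalues j)
  else 0

theorem leftRightForm_of_isHermitian (k : ℝ → ℝ → ℝ) (hA : A.IsHermitian) (hB : B.IsHermitian)
    (X : Matrix n n 𝕜) :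
    leftRightForm k A B X =
      ∑ i, ∑ j, ‖eigenCoords hA hB X i j‖ ^ 2 * k (hA.eigenvalues i) (hB.eigenvalues j) :=
  dif_pos ⟨hA, hB⟩

theorem leftRightForm_const_mul (c : ℝ) (k : ℝ → ℝ → ℝ) (A B X : Matrix n n 𝕜) :
    leftRightForm (fun a b => c * k a b) A B X = c * leftRightForm k A B X := by
  unfold leftRightForm
  split_ifs
  · simp only [Finset.mul_sum, mul_left_comm]
  · rw [mul_zero]

theorem leftRightForm_sub_congr {k k' : ℝ → ℝ → ℝ}
    (h : ∀ a b, 0 ≤ a → 0 ≤ b → a ≠ b → k a b = k' a b) (hA : A.PosSemidef) (hB : B.PosSemidef) :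
    leftRightForm k A B (A - B) = leftRightForm k' A B (A - B) := by
  simp only [leftRightForm_of_isHermitian _ hA.1 hB.1]
  refine Finset.sum_congr rfl fun i _ => Finset.sum_congr rfl fun j _ => ?_
  by_cases hij : hA.1.eigenvalues i = hB.1.eigenvalues j
  · simp [eigenCoords_sub, hij]
  · rw [h _ _ (hA.eigenvalues_nonneg i) (hB.eigenvalues_nonneg j) hij]

theorem re_trace_sub_mul_cfc_sub_cfc (f : ℝ → ℝ) (hA : A.IsHermitian) (hB : B.IsHermitian) :
    RCLike.re (trace ((A - B) * (cfc f A - cfc f B))) =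
      leftRightForm (fun a b => (f a - f b) / (a - b)) A B (A - B) := by
  have hf : (cfc f A - cfc f B)ᴴ = cfc f A - cfc f B :=
    (IsSelfAdjoint.cfc (f := f) (a := A)).sub (IsSelfAdjoint.cfc (f := f) (a := B))
  rw [leftRightForm_of_isHermitian _ hA hB, ← hf,
    trace_mul_conjTranspose_eq_sum_eigenCoords hA hB]
  simp only [map_sum, eigenCoords_sub, eigenCoords_cfc_sub_cfc]
  refine Finset.sum_congr rfl fun i _ => Finset.sum_congr rfl fun j _ => ?_
  generalize hA.eigenvalues i = a, hB.eigenvalues j = b, eigenCoords hA hB 1 i j = z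
  have hre : RCLike.re (((a - b : ℝ) : 𝕜) * z * star (((f a - f b : ℝ) : 𝕜) * z)) =
      (a - b) * (f a - f b) * ‖z‖ ^ 2 := by
    rw [star_mul', ← starRingEnd_apply, RCLike.conj_ofReal, mul_mul_mul_comm, ← starRingEnd_apply,
      RCLike.mul_conj]
    norm_cast
  rw [hre, norm_mul, RCLike.norm_ofReal, mul_pow, sq_abs]
  rcases eq_or_ne a b with rfl | hab
  · simp
  · field_simp [sub_ne_zero.2 hab]

section Integral

variable {α : Type*} [MeasurableSpace α] {μ : Measure α} {K : α → ℝ → ℝ → ℝ}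
  (hK : ∀ a b, 0 ≤ a → 0 ≤ b → a ≠ b → Integrable (fun t => K t a b) μ)
  (hA : A.PosSemidef) (hB : B.PosSemidef)
include hK

theorem integrable_norm_eigenCoords_sub_sq_mul (i j : n) :
    Integrable (fun t => ‖eigenCoords hA.1 hB.1 (A - B) i j‖ ^ 2 *
      K t (hA.1.eigenvalues i) (hB.1.eigenvalues j)) μ := by
  by_cases hij : hA.1.eigenvalues i = hB.1.eigenvalues j
  · simp [eigenCoords_sub, hij]
  · exact (hK _ _ (hA.eigenvalues_nonneg i) (hB.eigenvalues_nonneg j) hij).const_mul _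

include hA hB

theorem integrable_leftRightForm_sub :
    Integrable (fun t => leftRightForm (K t) A B (A - B)) μ := by
  simp only [leftRightForm_of_isHermitian _ hA.1 hB.1]
  exact integrable_finsetSum _ fun i _ => integrable_finsetSum _ fun j _ =>
    integrable_norm_eigenCoords_sub_sq_mul hK hA hB i j

theorem integral_leftRightForm_sub :
    ∫ t, leftRightForm (K t) A B (A - B) ∂μ =
      leftRightForm (fun a b => ∫ t, K t a b ∂μ) A B (A - B) := by
  have hint := integrable_norm_eigenCoords_sub_sq_mul hK hA hB
  simp only [leftRightForm_of_isHermitian _ hA.1 hB.1]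
  rw [integral_finsetSum _ fun i _ => integrable_finsetSum _ fun j _ => hint i j]
  refine Finset.sum_congr rfl fun i _ => ?_
  rw [integral_finsetSum _ fun j _ => hint i j]
  simp only [integral_const_mul]

end Integral

end LeftRightForm

section Variational

theorem resolventMinorant_eq_sum (u v t : ℝ) (Y X : Matrix n n 𝕜) (hA : A.IsHermitian)
    (hB : B.IsHermitian) :
    resolventMinorant u v t Y A B X = ∑ i, ∑ j,
      (2 * RCLike.re (eigenCoords hA hB X i j * star (eigenCoords hA hB Y i j)) -
        (u * hA.eigenvalues i + v * hB.eigenvalues j + t) * ‖eigenCoords hA hB Y i j‖ ^ 2) := by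
  simp only [resolventMinorant, trace_mul_conjTranspose_eq_sum_eigenCoords hA hB,
    eigenCoords_mul_left, eigenCoords_mul_right, map_sum, Finset.mul_sum,
    ← Finset.sum_add_distrib, ← Finset.sum_sub_distrib]
  refine Finset.sum_congr rfl fun i _ => Finset.sum_congr rfl fun j _ => ?_
  simp only [mul_assoc, RCLike.re_ofReal_mul, ← starRingEnd_apply, RCLike.mul_conj,
    ← RCLike.ofReal_pow, RCLike.ofReal_re]
  ring

theorem two_mul_re_mul_star_sub_le (x y : 𝕜) {m : ℝ} (hm : 0 < m) :
    2 * RCLike.re (x * star y) - m * ‖y‖ ^ 2 ≤ ‖x‖ ^ 2 * m⁻¹ := by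
  have h := @norm_sub_sq 𝕜 𝕜 _ _ _ ((m : 𝕜) * y) x
  rw [RCLike.inner_apply, map_mul (starRingEnd 𝕜), RCLike.conj_ofReal, mul_left_comm,
    RCLike.re_ofReal_mul, norm_mul, RCLike.norm_ofReal, abs_of_pos hm, starRingEnd_apply] at h
  rw [← div_eq_mul_inv, le_div_iff₀ hm]
  linarith [sq_nonneg ‖(m : 𝕜) * y - x‖]

theorem two_mul_re_mul_star_sub_eq (x : 𝕜) {m : ℝ} (hm : m ≠ 0) :
    2 * RCLike.re (x * star ((m⁻¹ : ℝ) * x)) - m * ‖(m⁻¹ : ℝ) * x‖ ^ 2 = ‖x‖ ^ 2 * m⁻¹ := by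
  rw [star_mul', mul_left_comm, ← starRingEnd_apply, RCLike.conj_ofReal, RCLike.re_ofReal_mul,
    ← starRingEnd_apply, RCLike.mul_conj, norm_mul, RCLike.norm_ofReal, mul_pow, sq_abs,
    ← RCLike.ofReal_pow, RCLike.ofReal_re]
  field_simp
  ring

variable {u v t : ℝ} (hu : 0 ≤ u) (hv : 0 ≤ v) (ht : 0 < t)
include hu hv ht

theorem resolventMinorant_le (hA : A.PosSemidef) (hB : B.PosSemidef) (Y X : Matrix n n 𝕜) :
    resolventMinorant u v t Y A B X ≤ leftRightForm (fun a b => (u * a + v * b + t)⁻¹) A B X := by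
  rw [resolventMinorant_eq_sum _ _ _ _ _ hA.1 hB.1, leftRightForm_of_isHermitian _ hA.1 hB.1]
  refine Finset.sum_le_sum fun i _ => Finset.sum_le_sum fun j _ => ?_
  have := hA.eigenvalues_nonneg i
  have := hB.eigenvalues_nonneg j
  exact two_mul_re_mul_star_sub_le _ _ (by positivity)

theorem exists_resolventMinorant_eq (hA : A.PosSemidef) (hB : B.PosSemidef) (X : Matrix n n 𝕜) :
    ∃ Y, resolventMinorant u v t Y A B X =
      leftRightForm (fun a b => (u * a + v * b + t)⁻¹) A B X := by
  obtain ⟨Y, hY⟩ := eigenCoords_surjective hA.1 hB.1 (of fun i j =>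
    ((u * hA.1.eigenvalues i + v * hB.1.eigenvalues j + t)⁻¹ : ℝ) * eigenCoords hA.1 hB.1 X i j)
  refine ⟨Y, ?_⟩
  rw [resolventMinorant_eq_sum _ _ _ _ _ hA.1 hB.1, leftRightForm_of_isHermitian _ hA.1 hB.1, hY]
  refine Finset.sum_congr rfl fun i _ => Finset.sum_congr rfl fun j _ => ?_
  have := hA.eigenvalues_nonneg i
  have := hB.eigenvalues_nonneg j
  exact two_mul_re_mul_star_sub_eq _ (by positivity)

end Variational

section JointConvexity

theorem convexOn_leftRightForm_inv {u v t : ℝ} (hu : 0 ≤ u) (hv : 0 ≤ v) (ht : 0 < t) :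
    ConvexOn ℝ (posSemidefPairs 𝕜 n ×ˢ Set.univ)
      fun P => leftRightForm (fun a b => (u * a + v * b + t)⁻¹) P.1.1 P.1.2 P.2 := by
  have hS : Convex ℝ (posSemidefPairs 𝕜 n ×ˢ (Set.univ : Set (Matrix n n 𝕜))) :=
    convex_posSemidefPairs.prod convex_univ
  refine convexOn_of_exists_convexOn_minorant hS fun P hP => ?_
  obtain ⟨Y, hY⟩ := exists_resolventMinorant_eq hu hv ht hP.1.1 hP.1.2 P.2
  exact ⟨_, convexOn_resolventMinorant u v t Y hS, hY,
    fun Q hQ => resolventMinorant_le hu hv ht hQ.1.1 hQ.1.2 Y Q.2⟩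

variable (𝕜 n) in
/-- Joint convexity of `(A, B) ↦ ⟨A - B, k(L_A, R_B) (A - B)⟩` on pairs of positive semidefinite
matrices. The junk diagonal value `0` of a divided difference is harmless: the coordinates of
`A - B` vanish where the eigenvalues of `A` and `B` coincide. -/
def IsJointlyConvexKernel (k : ℝ → ℝ → ℝ) : Prop :=
  ConvexOn ℝ (posSemidefPairs 𝕜 n) fun P => leftRightForm k P.1 P.2 (P.1 - P.2)

namespace IsJointlyConvexKernel

variable {k k' : ℝ → ℝ → ℝ}

theorem congr (hk : IsJointlyConvexKernel 𝕜 n k)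
    (h : ∀ a b, 0 ≤ a → 0 ≤ b → a ≠ b → k a b = k' a b) : IsJointlyConvexKernel 𝕜 n k' :=
  ConvexOn.congr hk fun _ hP => leftRightForm_sub_congr h hP.1 hP.2

theorem const_mul (hk : IsJointlyConvexKernel 𝕜 n k) {c : ℝ} (hc : 0 ≤ c) :
    IsJointlyConvexKernel 𝕜 n fun a b => c * k a b :=
  (ConvexOn.smul hc hk).congr fun P _ => (leftRightForm_const_mul c k P.1 P.2 (P.1 - P.2)).symm

theorem integral {α : Type*} [MeasurableSpace α] {μ : Measure α} {K : α → ℝ → ℝ → ℝ}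
    (hK : ∀ᵐ t ∂μ, IsJointlyConvexKernel 𝕜 n (K t))
    (hint : ∀ a b, 0 ≤ a → 0 ≤ b → a ≠ b → Integrable (fun t => K t a b) μ) :
    IsJointlyConvexKernel 𝕜 n fun a b => ∫ t, K t a b ∂μ := by
  have hconv : ConvexOn ℝ (posSemidefPairs 𝕜 n)
      fun P => ∫ t, leftRightForm (K t) P.1 P.2 (P.1 - P.2) ∂μ :=
    integral_convexOn_of_integrand_ae convex_posSemidefPairs hK
      fun P hP => integrable_leftRightForm_sub hint hP.1 hP.2
  exact hconv.congr fun P hP => integral_leftRightForm_sub hint hP.1 hP.2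

end IsJointlyConvexKernel

theorem isJointlyConvexKernel_inv {u v t : ℝ} (hu : 0 ≤ u) (hv : 0 ≤ v) (ht : 0 < t) :
    IsJointlyConvexKernel 𝕜 n fun a b => (u * a + v * b + t)⁻¹ := by
  refine ⟨convex_posSemidefPairs, fun P hP Q hQ a b ha hb hab => ?_⟩
  have hdiff : (a • P + b • Q).1 - (a • P + b • Q).2 = a • (P.1 - P.2) + b • (Q.1 - Q.2) := by
    simp only [Prod.fst_add, Prod.snd_add, Prod.smul_fst, Prod.smul_snd, smul_sub]
    abel
  simp only [hdiff]
  exact (convexOn_leftRightForm_inv hu hv ht).2 (x := (P, P.1 - P.2)) ⟨hP, Set.mem_univ _⟩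
    (y := (Q, Q.1 - Q.2)) ⟨hQ, Set.mem_univ _⟩ ha hb hab

theorem isJointlyConvexKernel_segment_rpow {u s : ℝ} (hu : u ∈ Ioo (0 : ℝ) 1)
    (hs : s ∈ Ioo (0 : ℝ) 1) :
    IsJointlyConvexKernel 𝕜 n fun a b => (u * a + (1 - u) * b) ^ (s - 1) := by
  have hpos : ∀ a b : ℝ, 0 ≤ a → 0 ≤ b → a ≠ b → 0 < u * a + (1 - u) * b := by
    intro a b ha hb hab
    have hu0 := hu.1
    have hu1 := sub_pos.2 hu.2
    rcases ha.eq_or_lt with rfl | ha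
    · have := hb.lt_of_ne hab
      positivity
    · positivity
  have hC := Real.integral_rpowIntegrand₀₁_one_pos hs
  have hint : IsJointlyConvexKernel 𝕜 n fun a b =>
      ∫ t in Ioi (0 : ℝ), t ^ (s - 1) * (u * a + (1 - u) * b + t)⁻¹ := by
    refine .integral ?_ fun a b ha hb hab => integrableOn_rpow_mul_inv_add hs (hpos a b ha hb hab)
    filter_upwards [ae_restrict_mem measurableSet_Ioi] with t ht
    exact (isJointlyConvexKernel_inv hu.1.le (sub_nonneg.2 hu.2.le) ht).const_mul
      (Real.rpow_nonneg (le_of_lt ht) _)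
  refine (hint.const_mul (inv_nonneg.2 hC.le)).congr fun a b ha hb hab => ?_
  rw [integral_rpow_mul_inv_add hs (hpos a b ha hb hab), mul_comm, mul_inv_cancel_right₀ hC.ne']

theorem isJointlyConvexKernel_rpow_sub_rpow_div_sub {s : ℝ} (hs : s ∈ Icc (0 : ℝ) 1) :
    IsJointlyConvexKernel 𝕜 n fun a b => (a ^ s - b ^ s) / (a - b) := by
  have hone : IsJointlyConvexKernel 𝕜 n fun _ _ => 1 := by
    simpa using isJointlyConvexKernel_inv (𝕜 := 𝕜) (n := n) le_rfl le_rfl one_pos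
  rcases hs.1.eq_or_lt with rfl | hs0
  · exact (hone.const_mul le_rfl).congr fun a b _ _ _ => by simp
  rcases hs.2.eq_or_lt with rfl | hs1
  · exact hone.congr fun a b _ _ hab => by simp [div_self (sub_ne_zero.2 hab)]
  have hint : IsJointlyConvexKernel 𝕜 n fun a b =>
      ∫ u in Ioo (0 : ℝ) 1, (u * a + (1 - u) * b) ^ (s - 1) := by
    refine .integral ?_ fun a b _ _ hab => ?_
    · filter_upwards [ae_restrict_mem measurableSet_Ioo] with u hu
      exact isJointlyConvexKernel_segment_rpow hu ⟨hs0, hs1⟩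
    · exact (intervalIntegrable_iff_integrableOn_Ioo_of_le zero_le_one).1
        (intervalIntegrable_segment_rpow (by linarith) hab)
  refine (hint.const_mul hs0.le).congr fun a b _ _ hab => ?_
  rw [rpow_sub_rpow_div_sub_eq_integral hs0 hab, intervalIntegral.integral_of_le zero_le_one,
    integral_Ioc_eq_integral_Ioo]

end JointConvexity

theorem Fp_jointly_convex_general {p : ℝ} (hp : p ∈ Icc (1 : ℝ) 2) :
    ConvexOn ℝ (posSemidefPairs 𝕜 n) fun P =>
      RCLike.re (trace ((P.1 - P.2) * (cfc (fun x : ℝ => x ^ (p - 1)) P.1 -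
        cfc (fun x : ℝ => x ^ (p - 1)) P.2))) := by
  have hs : p - 1 ∈ Icc (0 : ℝ) 1 := ⟨by linarith [hp.1], by linarith [hp.2]⟩
  exact ConvexOn.congr (isJointlyConvexKernel_rpow_sub_rpow_div_sub hs) fun P hP =>
    (re_trace_sub_mul_cfc_sub_cfc _ hP.1.1 hP.2.1).symm

/-- for `p ∈ (1,2)`, `F(ρ,σ) = tr[(ρ−σ)(ρ^{p−1}−σ^{p−1})]` is jointly convex on
pairs of positive definite matrices. -/
theorem Fp_jointly_convex {n : ℕ} (p : ℝ) (hp : p ∈ Set.Ioo (1 : ℝ) 2)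
    (ρ₁ ρ₂ σ₁ σ₂ : Matrix (Fin n) (Fin n) ℂ)
    (hρ₁ : ρ₁.PosDef) (hρ₂ : ρ₂.PosDef) (hσ₁ : σ₁.PosDef) (hσ₂ : σ₂.PosDef)
    (lam : ℝ) (hlam : lam ∈ Set.Icc (0 : ℝ) 1) :
    Fp p ((lam : ℂ) • ρ₁ + ((1 - lam : ℝ) : ℂ) • ρ₂)
        ((lam : ℂ) • σ₁ + ((1 - lam : ℝ) : ℂ) • σ₂) ≤
      lam * Fp p ρ₁ σ₁ + (1 - lam) * Fp p ρ₂ σ₂ := by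
  simp only [Complex.coe_smul]
  exact (Fp_jointly_convex_general ⟨hp.1.le, hp.2.le⟩).2 (x := (ρ₁, σ₁)) (y := (ρ₂, σ₂))
    ⟨hρ₁.posSemidef, hσ₁.posSemidef⟩ ⟨hρ₂.posSemidef, hσ₂.posSemidef⟩ hlam.1
    (sub_nonneg.2 hlam.2) (add_sub_cancel _ _)
end

section
/- Let f : (0,∞) → ℝ be C¹ and ρ, σ positive definite n×n matrices with spectral decompositions ρ = ∑ᵢ sᵢ pᵢ and σ = ∑ⱼ tⱼ qⱼ. Then tr(f'(a(t))(ρ−σ))' at direction ρ−σ is given by the Schur multiplier: for a(t)=(1−t)σ+tρ, d²/dt² tr(f(a(t))) = ∑_{i,j} f^{[2]}(λᵢ(t), λⱼ(t)) tr(Pᵢ(t)(ρ−σ)Pⱼ(t)(ρ−σ)), where λᵢ(t), Pᵢ(t) are eigenvalues and spectral projections of a(t) and f^{[2]}(x,y) = (f'(x)−f'(y))/(x−y) for x≠y, f^{[2]}(x,x) = f''(x). -/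
open Matrix
open scoped ComplexOrder

/-- The spectral projection of a Hermitian matrix onto the `i`-th eigenvector. -/
noncomputable def specProj {n : ℕ} {A : Matrix (Fin n) (Fin n) ℂ} (hA : A.IsHermitian)
    (i : Fin n) : Matrix (Fin n) (Fin n) ℂ :=
  (hA.eigenvectorUnitary : Matrix (Fin n) (Fin n) ℂ) *
    Matrix.diagonal (fun k => if k = i then (1 : ℂ) else 0) *
    star (hA.eigenvectorUnitary : Matrix (Fin n) (Fin n) ℂ)

/-- The first divided difference `f^{[2]}` of `f'` : `(f'(x)−f'(y))/(x−y)` for `x ≠ y`,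
and `f''(x)` on the diagonal. -/
noncomputable def divDiff2 (f' f'' : ℝ → ℝ) (x y : ℝ) : ℝ :=
  if x = y then f'' x else (f' x - f' y) / (x - y)

/-!
Resolving the identity by the spectral projections `Pᵢ` of a Hermitian matrix `A` gives, for every
Hermitian `C`, the exact divided difference formula
`g(C) - g(A) = ∑ᵢ Pᵢ (C - A) g[λᵢ, ·](C)`, where `g[x, y]` is the divided difference of `g`.
Divide by `s - t` along a curve `C = a(s)`, `A = a(t)`: since `g[λᵢ, ·]` is continuous at every
eigenvalue of `A`, the right-hand side converges, and the derivative of `g(a(s))` is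
`∑ᵢⱼ g[λᵢ, λⱼ] Pᵢ a'(t) Pⱼ` (the Daletskii–Krein formula). Under the trace with `g = f` only the
terms `i = j` survive, leaving `tr (f'(a(s)) (ρ - σ))`; the formula with `g = f'` then gives the
second derivative.
-/

open Filter Topology

section DividedDifference

theorem divDiff2_self (g g' : ℝ → ℝ) (x : ℝ) : divDiff2 g g' x x = g' x :=
  if_pos rfl

theorem sub_mul_divDiff2 (g g' : ℝ → ℝ) (x y : ℝ) :
    (y - x) * divDiff2 g g' x y = g y - g x := by
  unfold divDiff2
  split_ifs with h
  · simp [h]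
  · rw [← neg_sub y x, ← neg_sub (g y), neg_div_neg_eq,
      mul_div_cancel₀ _ (sub_ne_zero.2 (Ne.symm h))]

theorem divDiff2_eq_dslope {g g' : ℝ → ℝ} {x : ℝ} (hg : HasDerivAt g (g' x) x) :
    divDiff2 g g' x = dslope g x := by
  ext y
  rcases eq_or_ne y x with rfl | hyx
  · rw [divDiff2_self, dslope_same, hg.deriv]
  · rw [dslope_of_ne _ hyx, slope_def_field, ← sub_mul_divDiff2 g g' x y,
      mul_div_cancel_left₀ _ (sub_ne_zero.2 hyx)]

theorem continuousAt_divDiff2 {g g' : ℝ → ℝ} {x y : ℝ} (hx : HasDerivAt g (g' x) x)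
    (hy : ContinuousAt g y) : ContinuousAt (divDiff2 g g' x) y := by
  rw [divDiff2_eq_dslope hx]
  rcases eq_or_ne y x with rfl | hyx
  · exact continuousAt_dslope_same.2 hx.differentiableAt
  · exact (continuousAt_dslope_of_ne hyx).2 hy

end DividedDifference

section SpectralProjection

variable {n : ℕ} {A : Matrix (Fin n) (Fin n) ℂ} (hA : A.IsHermitian)

theorem specProj_eq_conjStarAlgAut_single (i : Fin n) :
    specProj hA i = Unitary.conjStarAlgAut ℂ _ hA.eigenvectorUnitary (Matrix.single i i 1) := by
  rw [Unitary.conjStarAlgAut_apply, ← Matrix.diagonal_single, specProj]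
  congr! 4 with k
  simp [Pi.single_apply]

theorem completeOrthogonalIdempotents_specProj : CompleteOrthogonalIdempotents (specProj hA) := by
  have hsingle : CompleteOrthogonalIdempotents fun i : Fin n ↦ Matrix.single i i (1 : ℂ) :=
    CompleteOrthogonalIdempotents.iff_ortho_complete.2
      ⟨fun i j hij ↦ Matrix.single_mul_single_of_ne _ _ _ _ hij _, Matrix.sum_single_one⟩
  rw [funext (specProj_eq_conjStarAlgAut_single hA)]
  exact hsingle.map (Unitary.conjStarAlgAut ℂ _ hA.eigenvectorUnitary :
    Matrix (Fin n) (Fin n) ℂ →+* Matrix (Fin n) (Fin n) ℂ)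

theorem cfc_eq_sum_specProj (g : ℝ → ℝ) :
    cfc g A = ∑ i, g (hA.eigenvalues i) • specProj hA i := by
  simp_rw [hA.cfc_eq, Matrix.IsHermitian.cfc, specProj_eq_conjStarAlgAut_single, ← Complex.coe_smul,
    ← map_smul, ← map_sum, Matrix.smul_single, smul_eq_mul, mul_one, Matrix.sum_single_eq_diagonal]
  rfl

theorem specProj_mul_cfc (i : Fin n) (g : ℝ → ℝ) :
    specProj hA i * cfc g A = g (hA.eigenvalues i) • specProj hA i := by
  simp [cfc_eq_sum_specProj hA, Finset.mul_sum,
    (completeOrthogonalIdempotents_specProj hA).mul_eq]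

theorem specProj_mul_eq_eigenvalue_smul (i : Fin n) :
    specProj hA i * A = hA.eigenvalues i • specProj hA i := by
  simpa only [cfc_id ℝ A hA.isSelfAdjoint, id] using specProj_mul_cfc hA i id

theorem trace_specProj_mul_mul_specProj (B : Matrix (Fin n) (Fin n) ℂ) (i j : Fin n) :
    (specProj hA i * B * specProj hA j).trace = if i = j then (specProj hA i * B).trace else 0 := by
  rw [Matrix.trace_mul_comm, ← mul_assoc, (completeOrthogonalIdempotents_specProj hA).mul_eq]
  split_ifs <;> simp_all

theorem sum_divDiff2_mul_re_trace_specProj (g g' : ℝ → ℝ) (B : Matrix (Fin n) (Fin n) ℂ) :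
    ∑ i, ∑ j, divDiff2 g g' (hA.eigenvalues i) (hA.eigenvalues j) *
        (specProj hA i * B * specProj hA j).trace.re = (cfc g' A * B).trace.re := by
  simp [trace_specProj_mul_mul_specProj, apply_ite Complex.re, divDiff2_self,
    cfc_eq_sum_specProj hA, Finset.sum_mul, Matrix.trace_sum]

end SpectralProjection

section FunctionalCalculus

variable {m 𝕜 : Type*} [RCLike 𝕜] [Fintype m] [DecidableEq m]

theorem continuousOn_spectrum_matrix (g : ℝ → ℝ) (C : Matrix m m 𝕜) :
    ContinuousOn g (spectrum ℝ C) :=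
  C.finite_real_spectrum.continuousOn g

theorem sub_smul_mul_cfc_divDiff2 {C : Matrix m m 𝕜} (hC : C.IsHermitian) (g g' : ℝ → ℝ) (x : ℝ) :
    (C - x • 1) * cfc (divDiff2 g g' x) C = cfc g C - g x • 1 := by
  have hsub (φ : ℝ → ℝ) (c : ℝ) : cfc (fun y ↦ φ y - c) C = cfc φ C - c • 1 := by
    rw [cfc_sub _ _ C (continuousOn_spectrum_matrix _ C), cfc_const c C hC.isSelfAdjoint,
      Algebra.algebraMap_eq_smul_one]
  calc (C - x • 1) * cfc (divDiff2 g g' x) C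
      = cfc (fun y ↦ y - x) C * cfc (divDiff2 g g' x) C := by
        rw [hsub fun y ↦ y, cfc_id' ℝ C hC.isSelfAdjoint]
    _ = cfc (fun y ↦ (y - x) * divDiff2 g g' x y) C :=
        (cfc_mul _ _ C (continuousOn_spectrum_matrix _ C) (continuousOn_spectrum_matrix _ C)).symm
    _ = cfc g C - g x • 1 := by
        simp_rw [sub_mul_divDiff2, hsub]

theorem cfc_sub_cfc_eq_sum_specProj_mul {n : ℕ} {A C : Matrix (Fin n) (Fin n) ℂ}
    (hA : A.IsHermitian) (hC : C.IsHermitian) (g g' : ℝ → ℝ) :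
    cfc g C - cfc g A =
      ∑ i, specProj hA i * (C - A) * cfc (divDiff2 g g' (hA.eigenvalues i)) C := by
  have hterm (i : Fin n) : specProj hA i * (C - A) * cfc (divDiff2 g g' (hA.eigenvalues i)) C =
      specProj hA i * (cfc g C - cfc g A) :=
    calc specProj hA i * (C - A) * cfc (divDiff2 g g' (hA.eigenvalues i)) C
        = specProj hA i * ((C - hA.eigenvalues i • 1) *
            cfc (divDiff2 g g' (hA.eigenvalues i)) C) := by
          rw [mul_sub, specProj_mul_eq_eigenvalue_smul, ← mul_assoc, mul_sub, mul_smul_comm,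
            mul_one]
      _ = specProj hA i * (cfc g C - cfc g A) := by
          rw [sub_smul_mul_cfc_divDiff2 hC, mul_sub, mul_sub, specProj_mul_cfc, mul_smul_comm,
            mul_one]
  simp_rw [hterm, ← Finset.sum_mul, (completeOrthogonalIdempotents_specProj hA).complete, one_mul]

end FunctionalCalculus

section Continuity

variable {X : Type*} {l : Filter X}

theorem eventually_forall_mem_spectrum {𝕜 R : Type*} [NormedField 𝕜] [ProperSpace 𝕜]
    [NormedRing R] [NormedAlgebra 𝕜 R] [CompleteSpace R] {a : X → R} {a₀ : R}
    (ha : Tendsto a l (𝓝 a₀)) {p : 𝕜 → Prop} (hp : ∀ᶠ x in 𝓝ˢ (spectrum 𝕜 a₀), p x) :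
    ∀ᶠ s in l, ∀ x ∈ spectrum 𝕜 (a s), p x :=
  (ha.eventually ((upperHemicontinuous_spectrum 𝕜 R).upperHemicontinuousAt a₀ _ hp)).mono
    fun _ hs ↦ subset_of_mem_nhdsSet hs

open scoped Matrix.Norms.L2Operator

/- The spectrum of the limit is finite, so `φ` agrees there with a polynomial `q`; then `φ - q` is
small near that spectrum, while `q(a s)` converges. -/
theorem tendsto_cfc_matrix {m : Type*} [Fintype m] [DecidableEq m]
    {a : X → Matrix m m ℂ} {A : Matrix m m ℂ} (ha : Tendsto a l (𝓝 A))
    (hherm : ∀ᶠ s in l, (a s).IsHermitian) (hA : A.IsHermitian)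
    {φ : ℝ → ℝ} (hφ : ∀ x ∈ spectrum ℝ A, ContinuousAt φ x) :
    Tendsto (fun s ↦ cfc φ (a s)) l (𝓝 (cfc φ A)) := by
  obtain ⟨q, hq⟩ : ∃ q : Polynomial ℝ, Set.EqOn q.eval φ (spectrum ℝ A) :=
    ⟨Lagrange.interpolate A.finite_real_spectrum.toFinset id φ, fun x hx ↦
      Lagrange.eval_interpolate_at_node φ Function.injective_id.injOn
        (A.finite_real_spectrum.mem_toFinset.2 hx)⟩
  have hpoly : Tendsto (fun s ↦ cfc q.eval (a s)) l (𝓝 (cfc φ A)) := by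
    rw [← cfc_congr hq, cfc_polynomial q A hA.isSelfAdjoint]
    refine ((q.continuous_aeval.tendsto A).comp ha).congr' ?_
    filter_upwards [hherm] with s hs
    exact (cfc_polynomial q (a s) hs.isSelfAdjoint).symm
  have herror : Tendsto (fun s ↦ cfc (fun x ↦ φ x - q.eval x) (a s)) l (𝓝 0) := by
    refine Metric.tendsto_nhds.2 fun ε hε ↦ ?_
    have hsmall : ∀ᶠ x in 𝓝ˢ (spectrum ℝ A), ‖φ x - q.eval x‖ < ε := by
      refine eventually_nhdsSet_iff_forall.2 fun x hx ↦ ?_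
      refine ((hφ x hx).sub q.continuousAt).norm.eventually_lt_const ?_
      simpa [hq hx] using hε
    filter_upwards [eventually_forall_mem_spectrum ha hsmall] with s hs
    simpa only [dist_zero_right] using norm_cfc_lt hε hs
  refine (zero_add (cfc φ A) ▸ herror.add hpoly).congr fun s ↦ ?_
  rw [cfc_sub _ _ (a s) (continuousOn_spectrum_matrix _ _) (continuousOn_spectrum_matrix _ _),
    sub_add_cancel]

end Continuity

section Derivative

open scoped Matrix.Norms.L2Operator

variable {n : ℕ} {a : ℝ → Matrix (Fin n) (Fin n) ℂ} {B : Matrix (Fin n) (Fin n) ℂ} {t : ℝ}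
  {g g' : ℝ → ℝ}

theorem hasDerivAt_cfc_matrix (ha : HasDerivAt a B t) (hherm : ∀ᶠ s in 𝓝 t, (a s).IsHermitian)
    (hat : (a t).IsHermitian) (hg : ∀ x ∈ spectrum ℝ (a t), HasDerivAt g (g' x) x) :
    HasDerivAt (fun s ↦ cfc g (a s))
      (∑ i, ∑ j, divDiff2 g g' (hat.eigenvalues i) (hat.eigenvalues j) •
        (specProj hat i * B * specProj hat j)) t := by
  have hlim (i : Fin n) :
      Tendsto (fun s ↦ cfc (divDiff2 g g' (hat.eigenvalues i)) (a s)) (𝓝[≠] t)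
        (𝓝 (cfc (divDiff2 g g' (hat.eigenvalues i)) (a t))) :=
    tendsto_cfc_matrix (ha.continuousAt.mono_left nhdsWithin_le_nhds)
      (hherm.filter_mono nhdsWithin_le_nhds) hat fun x hx ↦
        continuousAt_divDiff2 (hg _ (hat.eigenvalues_mem_spectrum_real i)) (hg x hx).continuousAt
  have hslope : Tendsto
      (fun s ↦ ∑ i, specProj hat i * slope a t s * cfc (divDiff2 g g' (hat.eigenvalues i)) (a s))
      (𝓝[≠] t)
      (𝓝 (∑ i, specProj hat i * B * cfc (divDiff2 g g' (hat.eigenvalues i)) (a t))) :=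
    tendsto_finsetSum _ fun i _ ↦ (ha.tendsto_slope.const_mul _).mul (hlim i)
  simp_rw [← mul_smul_comm, ← Finset.mul_sum, ← cfc_eq_sum_specProj hat]
  refine hasDerivAt_iff_tendsto_slope.2 (hslope.congr' ?_)
  filter_upwards [hherm.filter_mono nhdsWithin_le_nhds] with s hs
  simp only [slope_def_module, cfc_sub_cfc_eq_sum_specProj_mul hat hs g g', Finset.smul_sum,
    mul_smul_comm, smul_mul_assoc]

theorem hasDerivAt_re_trace_mul {m : Type*} [Fintype m]
    {M : ℝ → Matrix m m ℂ} {M' : Matrix m m ℂ}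
    (hM : HasDerivAt M M' t) (D : Matrix m m ℂ) :
    HasDerivAt (fun s ↦ (M s * D).trace.re) (M' * D).trace.re t := by
  classical
  exact (LinearMap.toContinuousLinearMap (Complex.reLm ∘ₗ Matrix.traceLinearMap m ℝ ℂ ∘ₗ
    LinearMap.mulRight ℝ D)).hasFDerivAt.comp_hasDerivAt t hM

theorem hasDerivAt_re_trace_cfc_mul (ha : HasDerivAt a B t)
    (hherm : ∀ᶠ s in 𝓝 t, (a s).IsHermitian) (hat : (a t).IsHermitian)
    (hg : ∀ x ∈ spectrum ℝ (a t), HasDerivAt g (g' x) x) (D : Matrix (Fin n) (Fin n) ℂ) :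
    HasDerivAt (fun s ↦ (cfc g (a s) * D).trace.re)
      (∑ i, ∑ j, divDiff2 g g' (hat.eigenvalues i) (hat.eigenvalues j) *
        (specProj hat i * B * specProj hat j * D).trace.re) t := by
  simpa [Finset.sum_mul, Matrix.trace_sum] using
    hasDerivAt_re_trace_mul (hasDerivAt_cfc_matrix ha hherm hat hg) D

theorem hasDerivAt_re_trace_cfc (ha : HasDerivAt a B t)
    (hherm : ∀ᶠ s in 𝓝 t, (a s).IsHermitian)
    (hg : ∀ x ∈ spectrum ℝ (a t), HasDerivAt g (g' x) x) :
    HasDerivAt (fun s ↦ (cfc g (a s)).trace.re) (cfc g' (a t) * B).trace.re t := by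
  have hat : (a t).IsHermitian := hherm.self_of_nhds
  simpa only [mul_one, sum_divDiff2_mul_re_trace_specProj] using
    hasDerivAt_re_trace_cfc_mul ha hherm hat hg 1

end Derivative

section Segment

theorem isHermitian_lineMap {m 𝕜 : Type*} [RCLike 𝕜] {ρ σ : Matrix m m 𝕜} (hρ : ρ.IsHermitian)
    (hσ : σ.IsHermitian) (t : ℝ) : (AffineMap.lineMap σ ρ t : Matrix m m 𝕜).IsHermitian := by
  rw [AffineMap.lineMap_apply_module]
  exact (hσ.smul (.all _)).add (hρ.smul (.all _))

theorem convex_setOf_posDef (m 𝕜 : Type*) [RCLike 𝕜] : Convex ℝ {A : Matrix m m 𝕜 | A.PosDef} :=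
  convex_iff_forall_pos.2 fun _ hA _ hB _ _ hs ht _ ↦ (hA.smul hs).add (hB.smul ht)

theorem spectrum_subset_Ioi_of_posDef {m 𝕜 : Type*} [RCLike 𝕜] [Fintype m] [DecidableEq m]
    {A : Matrix m m 𝕜} (hA : A.PosDef) : spectrum ℝ A ⊆ Set.Ioi 0 := by
  rw [hA.1.spectrum_real_eq_range_eigenvalues]
  exact Set.range_subset_iff.2 hA.eigenvalues_pos

end Segment

open scoped Matrix.Norms.L2Operator in
theorem second_deriv_trace_eq_schur_multiplier_general {n : ℕ} {f f' f'' : ℝ → ℝ}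
    {ρ σ : Matrix (Fin n) (Fin n) ℂ} (hρ : ρ.IsHermitian) (hσ : σ.IsHermitian) {t : ℝ}
    (hat : (AffineMap.lineMap σ ρ t : Matrix (Fin n) (Fin n) ℂ).IsHermitian)
    (hf' : ∀ᶠ x in 𝓝ˢ (spectrum ℝ (AffineMap.lineMap σ ρ t)), HasDerivAt f (f' x) x)
    (hf'' : ∀ x ∈ spectrum ℝ (AffineMap.lineMap σ ρ t), HasDerivAt f' (f'' x) x) :
    HasDerivAt (deriv fun s : ℝ ↦ (cfc f (AffineMap.lineMap σ ρ s)).trace.re)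
      (∑ i, ∑ j, divDiff2 f' f'' (hat.eigenvalues i) (hat.eigenvalues j) *
        (specProj hat i * (ρ - σ) * specProj hat j * (ρ - σ)).trace.re) t := by
  have hline (s : ℝ) : HasDerivAt (AffineMap.lineMap σ ρ) (ρ - σ) s :=
    AffineMap.hasDerivAt_lineMap
  have hherm (s : ℝ) : ∀ᶠ r : ℝ in 𝓝 s, (AffineMap.lineMap σ ρ r).IsHermitian :=
    .of_forall (isHermitian_lineMap hρ hσ)
  have hfirst : (deriv fun s : ℝ ↦ (cfc f (AffineMap.lineMap σ ρ s)).trace.re) =ᶠ[𝓝 t]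
      fun s ↦ (cfc f' (AffineMap.lineMap σ ρ s) * (ρ - σ)).trace.re := by
    filter_upwards [eventually_forall_mem_spectrum (hline t).continuousAt hf'] with s hs
    exact (hasDerivAt_re_trace_cfc (hline s) (hherm s) hs).deriv
  exact (hasDerivAt_re_trace_cfc_mul (hline t) (hherm t) _ hf'' _).congr_of_eventuallyEq hfirst

/-- second derivative of `t ↦ tr f((1−t)σ + tρ)` as a Schur multiplier:
`d²/dt² tr f(a(t)) = ∑_{i,j} f^{[2]}(λᵢ(t),λⱼ(t)) tr(Pᵢ(t)(ρ−σ)Pⱼ(t)(ρ−σ))`, where `λᵢ(t)`,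
`Pᵢ(t)` are the eigenvalues and spectral projections of `a(t) = (1−t)σ + tρ`. -/
theorem second_deriv_trace_eq_schur_multiplier {n : ℕ}
    (f f' f'' : ℝ → ℝ)
    (hf' : ∀ x ∈ Set.Ioi (0 : ℝ), HasDerivAt f (f' x) x)
    (hf'' : ∀ x ∈ Set.Ioi (0 : ℝ), HasDerivAt f' (f'' x) x)
    (hf''_cont : ContinuousOn f'' (Set.Ioi 0))
    (ρ σ : Matrix (Fin n) (Fin n) ℂ) (hρ : ρ.PosDef) (hσ : σ.PosDef)
    (a : ℝ → Matrix (Fin n) (Fin n) ℂ)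
    (ha : ∀ s : ℝ, a s = (((1 - s : ℝ)) : ℂ) • σ + ((s : ℝ) : ℂ) • ρ)
    (H : ℝ → ℝ) (hH : ∀ s : ℝ, H s = (Matrix.trace (cfc f (a s))).re)
    (t : ℝ) (ht : t ∈ Set.Icc (0 : ℝ) 1) (hat : (a t).IsHermitian) :
    deriv (deriv H) t = ∑ i, ∑ j,
      divDiff2 f' f'' (hat.eigenvalues i) (hat.eigenvalues j) *
        (Matrix.trace (specProj hat i * (ρ - σ) * specProj hat j * (ρ - σ))).re := by
  obtain rfl : a = AffineMap.lineMap σ ρ := by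
    ext1 s
    simp only [ha, Complex.coe_smul, AffineMap.lineMap_apply_module]
  obtain rfl : H = fun s ↦ (cfc f (AffineMap.lineMap σ ρ s)).trace.re := funext hH
  have hpos : spectrum ℝ (AffineMap.lineMap σ ρ t) ⊆ Set.Ioi 0 :=
    spectrum_subset_Ioi_of_posDef ((convex_setOf_posDef (Fin n) ℂ).lineMap_mem hσ hρ ht)
  exact (second_deriv_trace_eq_schur_multiplier_general hρ.1 hσ.1 hat
    (mem_of_superset (isOpen_Ioi.mem_nhdsSet.2 hpos) hf') fun x hx ↦ hf'' x (hpos hx)).deriv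
end
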